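/- Let Q be a probability distribution on a countably infinite alphabet with H(Q) < ∞, and L ≥ 1 an integer. Then the function ε ↦ H(P₁(Q, L, ε)), where P₁(Q, L, ε) is the Fano-type-1 distribution, is concave on the interval [0, 1 − ∑_{x=1}^L Q↓(x)]. -/

import Mathlib

noncomputable section
open scoped Classical

def IsPmf {α : Type*} (p : α → ℝ) : Prop := (∀ x, 0 ≤ p x) ∧ ∑' x, p x = 1

def topSum (p : ℕ → ℝ) (k : ℕ) : ℝ :=
  sSup {t : ℝ | ∃ s : Finset ℕ, s.card = k ∧ t = ∑ x ∈ s, p x}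

/-- `d` is the decreasing rearrangement of `p` (indexed from `1`):
`d` is nonincreasing on `{1,2,...}`, vanishes at the unused index `0`, and its
partial sums are the top-`k` sums of `p`. -/
def IsDecRearr (p d : ℕ → ℝ) : Prop :=
  d 0 = 0 ∧ (∀ i j, 1 ≤ i → i ≤ j → d j ≤ d i) ∧
    ∀ k, ∑ i ∈ Finset.Icc 1 k, d i = topSum p k

/-- The weight `V(j)` of the Fano-type-1 distribution. -/
def fanoV (d : ℕ → ℝ) (L : ℕ) (ε : ℝ) (j : ℕ) : ℝ :=
  if j ≤ L then ((1 - ε) - ∑ i ∈ Finset.Icc 1 (j - 1), d i) / ((L : ℝ) - j + 1) else 1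

/-- The weight `W(k)` of the Fano-type-1 distribution (for finite `k`). -/
def fanoW (d : ℕ → ℝ) (L : ℕ) (ε : ℝ) (k : ℕ) : ℝ :=
  if k = L then -1 else ((∑ i ∈ Finset.Icc 1 k, d i) - (1 - ε)) / ((k : ℝ) - L)

/-- `J := min{1 ≤ j < ∞ | Q↓(j) < V(j)}`. -/
def fanoJ (d : ℕ → ℝ) (L : ℕ) (ε : ℝ) : ℕ :=
  sInf {j : ℕ | 1 ≤ j ∧ d j < fanoV d L ε j}

/-- `K₁ := sup{L ≤ k < ∞ | W(k) < Q↓(k)}`, an extended natural number. -/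
def fanoK (d : ℕ → ℝ) (L : ℕ) (ε : ℝ) : ℕ∞ :=
  sSup {k : ℕ∞ | ∃ n : ℕ, k = (n : ℕ∞) ∧ L ≤ n ∧ fanoW d L ε n < d n}

/-- The Fano-type-1 distribution built from the decreasing rearrangement `d` of
`Q`, list size `L` and error level `ε` (with `W(∞) = 0`). -/
def fanoType1 (d : ℕ → ℝ) (L : ℕ) (ε : ℝ) (x : ℕ) : ℝ :=
  if x < fanoJ d L ε then d x
  else if x ≤ L then fanoV d L ε (fanoJ d L ε)
  else if (x : ℕ∞) ≤ fanoK d L ε then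
    (if fanoK d L ε = ⊤ then 0 else fanoW d L ε (fanoK d L ε).toNat)
  else d x


/-- Shannon entropy, valued in `[0,∞]`. -/
def entE (p : ℕ → ℝ) : ENNReal := ∑' x, ENNReal.ofReal (Real.negMulLog (p x))

/-!
Index symbols by decreasing probability. For an admissible `ε`, the Fano-type-1 distribution is the
least element, in the majorization order, among the nonincreasing distributions that majorize `Q↓`
and give mass at least `1 - ε` to the first `L` symbols. A mixture of the distributions for `ε₁` and
`ε₂` satisfies these constraints for the mixture of `ε₁` and `ε₂`, hence majorizes the distribution
found there, whose entropy is therefore at least that of the mixture (Schur concavity), which in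
turn is at least the mixture of the two entropies (concavity).
-/

open Finset Filter Topology

namespace IsPmf

variable {α : Type*} {p q : α → ℝ}

theorem of_hasSum (hnonneg : ∀ x, 0 ≤ p x) (hsum : HasSum p 1) : IsPmf p :=
  ⟨hnonneg, hsum.tsum_eq⟩

theorem hasSum (hp : IsPmf p) : HasSum p 1 := by
  have hs : Summable p := by
    by_contra h
    simpa [tsum_eq_zero_of_not_summable h] using hp.2
  exact hp.2 ▸ hs.hasSum

theorem sum_le_one (hp : IsPmf p) (s : Finset α) : ∑ x ∈ s, p x ≤ 1 :=
  sum_le_hasSum s (fun x _ => hp.1 x) hp.hasSum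

theorem mem_Icc (hp : IsPmf p) (x : α) : p x ∈ Set.Icc 0 1 :=
  ⟨hp.1 x, by simpa using hp.sum_le_one {x}⟩

theorem mix (hp : IsPmf p) (hq : IsPmf q) {a b : ℝ} (ha : 0 ≤ a) (hb : 0 ≤ b) (hab : a + b = 1) :
    IsPmf (a • p + b • q) := by
  refine of_hasSum (fun x => add_nonneg (mul_nonneg ha (hp.1 x)) (mul_nonneg hb (hq.1 x))) ?_
  have hsum := (hp.hasSum.const_smul a).add (hq.hasSum.const_smul b)
  rwa [smul_eq_mul, smul_eq_mul, mul_one, mul_one, hab] at hsum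

theorem tsum_ofReal (hp : IsPmf p) : ∑' x, ENNReal.ofReal (p x) = 1 := by
  rw [← ENNReal.ofReal_tsum_of_nonneg hp.1 hp.hasSum.summable, hp.2, ENNReal.ofReal_one]

theorem hasSum_nat_add {p : ℕ → ℝ} (hp : IsPmf p) (n : ℕ) :
    HasSum (fun x => p (x + n)) (1 - ∑ x ∈ range n, p x) :=
  (hasSum_nat_add_iff' n).2 hp.hasSum

end IsPmf

/-- Domination of all partial sums. When `p` and `m` are nonincreasing with the same total mass this
is the majorization relation `p ≺ m`. -/
def IsMajorizedBy (p m : ℕ → ℝ) : Prop :=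
  ∀ n, ∑ x ∈ range n, p x ≤ ∑ x ∈ range n, m x

/-- The information content `-log t` of an event of probability `t`. It is infinite at `t = 0`,
where `Real.log` takes the junk value `0`, so that it is antitone on `[0, ∞)`. -/
def surprisal (t : ℝ) : ENNReal :=
  if t = 0 then ⊤ else ENNReal.ofReal (-Real.log t)

theorem antitoneOn_surprisal : AntitoneOn surprisal (Set.Ici 0) := by
  intro s hs t _ hst
  rcases (Set.mem_Ici.1 hs).eq_or_lt with rfl | hs
  · simp [surprisal]
  · rw [surprisal, surprisal, if_neg (hs.trans_le hst).ne', if_neg hs.ne']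
    exact ENNReal.ofReal_le_ofReal (neg_le_neg (Real.log_le_log hs hst))

theorem ofReal_mul_surprisal {t : ℝ} (ht : 0 ≤ t) :
    ENNReal.ofReal t * surprisal t = ENNReal.ofReal (Real.negMulLog t) := by
  rcases ht.eq_or_lt with rfl | ht
  · simp
  · rw [surprisal, if_neg ht.ne', ← ENNReal.ofReal_mul ht.le, Real.negMulLog]
    ring_nf

theorem entE_eq_tsum_mul_surprisal {p : ℕ → ℝ} (hp : ∀ x, 0 ≤ p x) :
    entE p = ∑' x, ENNReal.ofReal (p x) * surprisal (p x) :=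
  tsum_congr fun x => (ofReal_mul_surprisal (hp x)).symm

theorem negMulLog_add_le {s t : ℝ} (hs : 0 ≤ s) (ht : 0 < t) :
    Real.negMulLog s + s ≤ s * -Real.log t + t := by
  rcases hs.eq_or_lt with rfl | hs
  · simpa using ht.le
  · have hlog : s * Real.log (t / s) ≤ s * (t / s - 1) :=
      mul_le_mul_of_nonneg_left (Real.log_le_sub_one_of_pos (div_pos ht hs)) hs.le
    rw [Real.log_div ht.ne' hs.ne', mul_sub, mul_sub, mul_div_cancel₀ t hs.ne'] at hlog
    rw [Real.negMulLog]
    linarith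

theorem ofReal_negMulLog_add_le {s t : ℝ} (hs : s ∈ Set.Icc 0 1) (ht : 0 ≤ t) :
    ENNReal.ofReal (Real.negMulLog s) + ENNReal.ofReal s ≤
      ENNReal.ofReal s * surprisal t + ENNReal.ofReal t := by
  rcases hs.1.eq_or_lt with rfl | hs0
  · simp
  rcases ht.eq_or_lt with rfl | ht
  · simp [surprisal, hs0]
  rw [surprisal, if_neg ht.ne', ← ENNReal.ofReal_mul hs.1,
    ← ENNReal.ofReal_add (Real.negMulLog_nonneg hs.1 hs.2) hs.1]
  exact (ENNReal.ofReal_le_ofReal (negMulLog_add_le hs.1 ht)).trans ENNReal.ofReal_add_le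

theorem entE_le_tsum_mul_surprisal {m p : ℕ → ℝ} (hm : IsPmf m) (hp : IsPmf p) :
    entE m ≤ ∑' x, ENNReal.ofReal (m x) * surprisal (p x) := by
  have hle : entE m + 1 ≤ (∑' x, ENNReal.ofReal (m x) * surprisal (p x)) + 1 := by
    nth_rw 1 [← hm.tsum_ofReal]
    rw [← hp.tsum_ofReal, entE, ← ENNReal.tsum_add, ← ENNReal.tsum_add]
    exact ENNReal.tsum_le_tsum fun x => ofReal_negMulLog_add_le (hm.mem_Icc x) (hp.1 x)
  exact (ENNReal.add_le_add_iff_right ENNReal.one_ne_top).1 hle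

theorem tsum_mul_sum_range_succ (a δ : ℕ → ENNReal) :
    ∑' n, a n * ∑ k ∈ range (n + 1), δ k = ∑' k, (∑' n, a (n + k)) * δ k := by
  let f : ℕ → ℕ → ENNReal := fun n k => if k ≤ n then a n * δ k else 0
  have hrow (n : ℕ) : a n * ∑ k ∈ range (n + 1), δ k = ∑' k, f n k := by
    rw [tsum_eq_sum (s := range (n + 1)) fun k hk => if_neg (by simpa using hk), mul_sum]
    exact sum_congr rfl fun k hk => (if_pos (by simpa [Nat.lt_succ_iff] using hk)).symm
  have hcol (k : ℕ) : ∑' n, f n k = (∑' n, a (n + k)) * δ k := by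
    rw [← Summable.sum_add_tsum_nat_add' (k := k) ENNReal.summable,
      sum_eq_zero fun n hn => if_neg (by simpa using hn), zero_add, ← ENNReal.tsum_mul_right]
    exact tsum_congr fun n => if_pos (Nat.le_add_left k n)
  simp only [hrow, ← hcol]
  exact ENNReal.tsum_comm

theorem exists_eq_sum_range_succ_of_monotone {c : ℕ → ENNReal} (hc : Monotone c) :
    ∃ δ : ℕ → ENNReal, ∀ n, c n = ∑ k ∈ range (n + 1), δ k := by
  refine ⟨fun k => c k - if k = 0 then 0 else c (k - 1), fun n => ?_⟩
  induction n with
  | zero => simp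
  | succ n ih =>
    rw [sum_range_succ, ← ih]
    simp [add_tsub_cancel_of_le (hc n.le_succ)]

-- First-order stochastic dominance, proved by exchanging the order of summation in the layer-cake
-- decomposition of `c`.
theorem tsum_mul_le_tsum_mul_of_tail_le {a b c : ℕ → ENNReal} (hc : Monotone c)
    (htail : ∀ k, ∑' n, a (n + k) ≤ ∑' n, b (n + k)) :
    ∑' n, a n * c n ≤ ∑' n, b n * c n := by
  obtain ⟨δ, hδ⟩ := exists_eq_sum_range_succ_of_monotone hc
  simp only [hδ, tsum_mul_sum_range_succ]
  exact ENNReal.tsum_le_tsum fun k => mul_le_mul_left (htail k) (δ k)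

theorem IsMajorizedBy.tsum_tail_le {p m : ℕ → ℝ} (h : IsMajorizedBy p m) (hp : IsPmf p)
    (hm : IsPmf m) (k : ℕ) :
    ∑' n, ENNReal.ofReal (m (n + k)) ≤ ∑' n, ENNReal.ofReal (p (n + k)) := by
  have htail {q : ℕ → ℝ} (hq : IsPmf q) :
      ∑' n, ENNReal.ofReal (q (n + k)) = ENNReal.ofReal (1 - ∑ x ∈ range k, q x) := by
    rw [← (hq.hasSum_nat_add k).tsum_eq,
      ENNReal.ofReal_tsum_of_nonneg (fun n => hq.1 _) (hq.hasSum_nat_add k).summable]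
  rw [htail hm, htail hp]
  exact ENNReal.ofReal_le_ofReal (sub_le_sub_left (h k) 1)

theorem IsMajorizedBy.entE_le {p m : ℕ → ℝ} (h : IsMajorizedBy p m) (hp : IsPmf p)
    (hanti : Antitone p) (hm : IsPmf m) : entE m ≤ entE p := by
  have hmono : Monotone fun x => surprisal (p x) := fun x y hxy =>
    antitoneOn_surprisal (hp.1 y) (hp.1 x) (hanti hxy)
  calc entE m ≤ ∑' x, ENNReal.ofReal (m x) * surprisal (p x) := entE_le_tsum_mul_surprisal hm hp
    _ ≤ ∑' x, ENNReal.ofReal (p x) * surprisal (p x) :=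
      tsum_mul_le_tsum_mul_of_tail_le hmono (h.tsum_tail_le hp hm)
    _ = entE p := (entE_eq_tsum_mul_surprisal hp.1).symm

theorem entE_concave {p q : ℕ → ℝ} (hp : ∀ x, p x ∈ Set.Icc 0 1) (hq : ∀ x, q x ∈ Set.Icc 0 1)
    {a b : ℝ} (ha : 0 ≤ a) (hb : 0 ≤ b) (hab : a + b = 1) :
    ENNReal.ofReal a * entE p + ENNReal.ofReal b * entE q ≤ entE (a • p + b • q) := by
  rw [entE, entE, ← ENNReal.tsum_mul_left, ← ENNReal.tsum_mul_left, ← ENNReal.tsum_add]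
  refine ENNReal.tsum_le_tsum fun x => ?_
  have hpx := Real.negMulLog_nonneg (hp x).1 (hp x).2
  have hqx := Real.negMulLog_nonneg (hq x).1 (hq x).2
  rw [← ENNReal.ofReal_mul ha, ← ENNReal.ofReal_mul hb,
    ← ENNReal.ofReal_add (mul_nonneg ha hpx) (mul_nonneg hb hqx)]
  exact ENNReal.ofReal_le_ofReal (Real.concaveOn_negMulLog.2 (hp x).1 (hq x).1 ha hb hab)

theorem isMajorizedBy_of_single_crossing {p m : ℕ → ℝ} (hp : IsPmf p) (hm : IsPmf m) {L : ℕ}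
    (hlow : ∀ x < L, p x ≤ m x) (hhigh : ∀ x, L ≤ x → m x ≤ p x) : IsMajorizedBy p m := by
  intro n
  rcases le_total n L with hn | hn
  · exact sum_le_sum fun x hx => hlow x ((mem_range.1 hx).trans_le hn)
  · have htail : 1 - ∑ x ∈ range n, m x ≤ 1 - ∑ x ∈ range n, p x :=
      hasSum_le (fun x => hhigh (x + n) (by omega)) (hm.hasSum_nat_add n) (hp.hasSum_nat_add n)
    linarith

-- On `[a, b]` the difference of partial sums is concave, so it is nonnegative once it is
-- nonnegative at the endpoints.
theorem sum_range_le_of_const_of_antitone {p m : ℕ → ℝ} {a b n : ℕ} {v : ℝ} (hm : Antitone m)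
    (hp : ∀ x ∈ Ico a b, p x = v) (han : a ≤ n) (hnb : n ≤ b)
    (ha : ∑ x ∈ range a, p x ≤ ∑ x ∈ range a, m x)
    (hb : ∑ x ∈ range b, p x ≤ ∑ x ∈ range b, m x) :
    ∑ x ∈ range n, p x ≤ ∑ x ∈ range n, m x := by
  rcases le_total v (m n) with hv | hv
  · have hle : ∑ x ∈ Ico a n, p x ≤ ∑ x ∈ Ico a n, m x := sum_le_sum fun x hx => by
      rw [mem_Ico] at hx
      exact (hp x (mem_Ico.2 ⟨hx.1, hx.2.trans_le hnb⟩)).le.trans (hv.trans (hm hx.2.le))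
    linarith [sum_range_add_sum_Ico p han, sum_range_add_sum_Ico m han]
  · have hle : ∑ x ∈ Ico n b, m x ≤ ∑ x ∈ Ico n b, p x := sum_le_sum fun x hx => by
      rw [mem_Ico] at hx
      exact (hm hx.1).trans (hv.trans (hp x (mem_Ico.2 ⟨han.trans hx.1, hx.2⟩)).ge)
    linarith [sum_range_add_sum_Ico p hnb, sum_range_add_sum_Ico m hnb]

theorem exists_threshold {e : ℕ → ℝ} (he : Antitone e) (N : ℕ) (v : ℝ) :
    ∃ j ≤ N, (∀ x < j, v ≤ e x) ∧ ∀ x, j ≤ x → x < N → e x ≤ v := by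
  have hex : ∃ j, N ≤ j ∨ e j ≤ v := ⟨N, .inl le_rfl⟩
  refine ⟨Nat.find hex, Nat.find_min' hex (.inl le_rfl), fun x hx => ?_, fun x hjx hxN => ?_⟩
  · exact (not_le.1 fun h => Nat.find_min hex hx (.inr h)).le
  · rcases Nat.find_spec hex with hN | hj
    · omega
    · exact (he hjx).trans hj

/-- The sequence `e` with its first `L` entries raised to at least `v` and the remaining ones
lowered to at most `w`; in this form the two plateaus of the Fano-type-1 distribution carry no
explicit indices. -/
def levelled (e : ℕ → ℝ) (L : ℕ) (v w : ℝ) (x : ℕ) : ℝ :=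
  if x < L then max (e x) v else min (e x) w

section Levelled

variable {e m : ℕ → ℝ} {L : ℕ} {v w : ℝ}

theorem levelled_of_lt {x : ℕ} (hx : x < L) : levelled e L v w x = max (e x) v :=
  if_pos hx

theorem levelled_of_le {x : ℕ} (hx : L ≤ x) : levelled e L v w x = min (e x) w :=
  if_neg hx.not_gt

theorem levelled_nonneg (he : ∀ x, 0 ≤ e x) (hw : 0 ≤ w) (x : ℕ) : 0 ≤ levelled e L v w x := by
  rcases lt_or_ge x L with hx | hx
  · exact (levelled_of_lt hx).symm ▸ (he x).trans (le_max_left _ _)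
  · exact (levelled_of_le hx).symm ▸ le_min (he x) hw

theorem antitone_levelled (he : Antitone e) : Antitone (levelled e L v w) := by
  intro x y hxy
  rcases lt_or_ge y L with hy | hy
  · rw [levelled_of_lt hy, levelled_of_lt (hxy.trans_lt hy)]
    exact max_le_max_right v (he hxy)
  rw [levelled_of_le hy]
  rcases lt_or_ge x L with hx | hx
  · exact (levelled_of_lt hx).symm ▸ (min_le_left _ _).trans ((he hxy).trans (le_max_left _ _))
  · exact (levelled_of_le hx).symm ▸ min_le_min_right w (he hxy)

theorem isMajorizedBy_levelled (he : IsPmf e) (hp : IsPmf (levelled e L v w)) :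
    IsMajorizedBy e (levelled e L v w) :=
  isMajorizedBy_of_single_crossing he hp
    (fun _ hx => (levelled_of_lt hx).symm ▸ le_max_left _ _)
    (fun _ hx => (levelled_of_le hx).symm ▸ min_le_left _ _)

theorem sum_range_levelled_le_of_le (he : Antitone e) (hm : Antitone m) (hmaj : IsMajorizedBy e m)
    (hL : ∑ x ∈ range L, levelled e L v w x ≤ ∑ x ∈ range L, m x) {n : ℕ} (hn : n ≤ L) :
    ∑ x ∈ range n, levelled e L v w x ≤ ∑ x ∈ range n, m x := by
  obtain ⟨j, hjL, habove, hbelow⟩ := exists_threshold he L v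
  have hinit (k : ℕ) (hk : k ≤ j) :
      ∑ x ∈ range k, levelled e L v w x ≤ ∑ x ∈ range k, m x := by
    refine (sum_congr rfl fun x hx => ?_).trans_le (hmaj k)
    have hxj : x < j := (mem_range.1 hx).trans_le hk
    rw [levelled_of_lt (hxj.trans_le hjL), max_eq_left (habove x hxj)]
  have hplateau : ∀ x ∈ Ico j L, levelled e L v w x = v := fun x hx => by
    rw [mem_Ico] at hx
    rw [levelled_of_lt hx.2, max_eq_right (hbelow x hx.1 hx.2)]
  rcases le_total n j with hnj | hjn
  · exact hinit n hnj
  · exact sum_range_le_of_const_of_antitone hm hplateau hjn hn (hinit j le_rfl) hL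

theorem sum_range_levelled_le_of_ge (he : Antitone e) (hpmf : IsPmf e)
    (hp : IsPmf (levelled e L v w)) (hm : Antitone m) (hnonneg : ∀ x, 0 ≤ m x)
    (hmaj : IsMajorizedBy e m)
    (hL : ∑ x ∈ range L, levelled e L v w x ≤ ∑ x ∈ range L, m x) {n : ℕ} (hn : L ≤ n) :
    ∑ x ∈ range n, levelled e L v w x ≤ ∑ x ∈ range n, m x := by
  rcases le_or_gt w 0 with hw | hw
  · have hle : ∑ x ∈ Ico L n, levelled e L v w x ≤ ∑ x ∈ Ico L n, m x :=
      sum_le_sum fun x hx => by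
        rw [levelled_of_le (mem_Ico.1 hx).1]
        exact (min_le_right _ _).trans (hw.trans (hnonneg x))
    linarith [sum_range_add_sum_Ico (levelled e L v w) hn, sum_range_add_sum_Ico m hn]
  obtain ⟨N, hN⟩ : ∃ N, e N ≤ w :=
    ((hpmf.hasSum.summable.tendsto_atTop_zero.eventually_lt_const hw).exists).imp fun _ => le_of_lt
  obtain ⟨K, -, habove, hbelow⟩ := exists_threshold he N w
  have hKle (x : ℕ) (hx : K ≤ x) : e x ≤ w := by
    rcases lt_or_ge x N with hxN | hxN
    · exact hbelow x hx hxN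
    · exact (he hxN).trans hN
  have hfinal (k : ℕ) (hLk : L ≤ k) (hKk : K ≤ k) :
      ∑ x ∈ range k, levelled e L v w x ≤ ∑ x ∈ range k, m x := by
    have htail (x : ℕ) : levelled e L v w (x + k) = e (x + k) := by
      rw [levelled_of_le (by omega), min_eq_left (hKle _ (by omega))]
    have hsum := (hp.hasSum_nat_add k).unique (by simpa only [htail] using hpmf.hasSum_nat_add k)
    linarith [hmaj k]
  rcases le_total K n with hKn | hnK
  · exact hfinal n hn hKn
  · refine sum_range_le_of_const_of_antitone hm (v := w) (fun x hx => ?_) hn hnK hL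
      (hfinal K (hn.trans hnK) le_rfl)
    rw [mem_Ico] at hx
    rw [levelled_of_le hx.1, min_eq_right (habove x hx.2)]

theorem sum_range_max_of_threshold {j : ℕ} (hjL : j ≤ L) (habove : ∀ x < j, v ≤ e x)
    (hbelow : ∀ x, j ≤ x → x < L → e x ≤ v) :
    ∑ x ∈ range L, max (e x) v = ∑ x ∈ range j, e x + ((L : ℝ) - j) * v := by
  have hinit : ∑ x ∈ range j, max (e x) v = ∑ x ∈ range j, e x :=
    sum_congr rfl fun x hx => max_eq_left (habove x (mem_range.1 hx))
  have hplateau : ∑ x ∈ Ico j L, max (e x) v = ((L : ℝ) - j) * v := by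
    rw [sum_congr rfl fun x hx => max_eq_right (hbelow x (mem_Ico.1 hx).1 (mem_Ico.1 hx).2)]
    simp [Nat.cast_sub hjL]
  rw [← sum_range_add_sum_Ico _ hjL, hinit, hplateau]

theorem hasSum_min_of_threshold (hpmf : IsPmf e) {K : ℕ} (hLK : L ≤ K) (habove : ∀ x < K, w ≤ e x)
    (hbelow : ∀ x, K ≤ x → e x ≤ w) :
    HasSum (fun x => min (e (x + L)) w) (((K : ℝ) - L) * w + (1 - ∑ x ∈ range K, e x)) := by
  have hplateau : ∑ x ∈ range (K - L), min (e (x + L)) w = ((K : ℝ) - L) * w := by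
    rw [sum_congr rfl fun x hx => min_eq_right (habove _ (Nat.add_lt_of_lt_sub (mem_range.1 hx)))]
    simp [Nat.cast_sub hLK]
  have htail (x : ℕ) : min (e (x + (K - L) + L)) w = e (x + K) := by
    rw [add_assoc, Nat.sub_add_cancel hLK, min_eq_left (hbelow _ (Nat.le_add_left K x))]
  rw [← hplateau]
  exact HasSum.sum_range_add (k := K - L) (by simpa only [htail] using hpmf.hasSum_nat_add K)

end Levelled

/-- The constraint set of the problem that the Fano-type-1 distribution solves: nonincreasing
distributions that majorize `e` and give mass at least `1 - ε` to their `L` most likely symbols. -/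
structure IsFeasible (e : ℕ → ℝ) (L : ℕ) (ε : ℝ) (m : ℕ → ℝ) : Prop where
  antitone : Antitone m
  isPmf : IsPmf m
  isMajorizedBy : IsMajorizedBy e m
  one_sub_le : 1 - ε ≤ ∑ x ∈ range L, m x

/-- A feasible distribution majorized by every feasible one; it has the largest entropy among
them. -/
structure IsOptimal (e : ℕ → ℝ) (L : ℕ) (ε : ℝ) (p : ℕ → ℝ) : Prop where
  isFeasible : IsFeasible e L ε p
  isMajorizedBy_of_isFeasible : ∀ m, IsFeasible e L ε m → IsMajorizedBy p m

section Optimal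

variable {e p q r : ℕ → ℝ} {L : ℕ} {ε₁ ε₂ a b : ℝ}

theorem IsFeasible.mix (hp : IsFeasible e L ε₁ p) (hq : IsFeasible e L ε₂ q) (ha : 0 ≤ a)
    (hb : 0 ≤ b) (hab : a + b = 1) : IsFeasible e L (a * ε₁ + b * ε₂) (a • p + b • q) := by
  have hsum (n : ℕ) : ∑ x ∈ range n, (a • p + b • q) x =
      a * ∑ x ∈ range n, p x + b * ∑ x ∈ range n, q x := by
    simp [sum_add_distrib, mul_sum]
  refine ⟨fun x y hxy => ?_, hp.isPmf.mix hq.isPmf ha hb hab, fun n => ?_, ?_⟩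
  · exact add_le_add (mul_le_mul_of_nonneg_left (hp.antitone hxy) ha)
      (mul_le_mul_of_nonneg_left (hq.antitone hxy) hb)
  · rw [hsum]
    calc ∑ x ∈ range n, e x = a * ∑ x ∈ range n, e x + b * ∑ x ∈ range n, e x := by
          rw [← add_mul, hab, one_mul]
      _ ≤ _ := add_le_add (mul_le_mul_of_nonneg_left (hp.isMajorizedBy n) ha)
          (mul_le_mul_of_nonneg_left (hq.isMajorizedBy n) hb)
  · rw [hsum]
    calc 1 - (a * ε₁ + b * ε₂) = a * (1 - ε₁) + b * (1 - ε₂) := by linear_combination -hab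
      _ ≤ _ := add_le_add (mul_le_mul_of_nonneg_left hp.one_sub_le ha)
          (mul_le_mul_of_nonneg_left hq.one_sub_le hb)

theorem IsOptimal.entE_concave (hp : IsOptimal e L ε₁ p) (hq : IsOptimal e L ε₂ q)
    (hr : IsOptimal e L (a * ε₁ + b * ε₂) r) (ha : 0 ≤ a) (hb : 0 ≤ b) (hab : a + b = 1) :
    ENNReal.ofReal a * entE p + ENNReal.ofReal b * entE q ≤ entE r := by
  have hmix := hp.isFeasible.mix hq.isFeasible ha hb hab
  calc _ ≤ entE (a • p + b • q) :=
        _root_.entE_concave hp.isFeasible.isPmf.mem_Icc hq.isFeasible.isPmf.mem_Icc ha hb hab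
    _ ≤ entE r := (hr.isMajorizedBy_of_isFeasible _ hmix).entE_le hr.isFeasible.isPmf
        hr.isFeasible.antitone hmix.isPmf

end Optimal

theorem isOptimal_levelled {e : ℕ → ℝ} {L : ℕ} {ε v w : ℝ} (he : Antitone e) (hpmf : IsPmf e)
    (hp : IsPmf (levelled e L v w)) (hmass : ∑ x ∈ range L, levelled e L v w x = 1 - ε) :
    IsOptimal e L ε (levelled e L v w) where
  isFeasible := ⟨antitone_levelled he, hp, isMajorizedBy_levelled hpmf hp, hmass.ge⟩
  isMajorizedBy_of_isFeasible m hm n := by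
    have hL := hmass.trans_le hm.one_sub_le
    rcases le_total n L with hn | hn
    · exact sum_range_levelled_le_of_le he hm.antitone hm.isMajorizedBy hL hn
    · exact sum_range_levelled_le_of_ge he hpmf hp hm.antitone hm.isPmf.1 hm.isMajorizedBy hL hn

/-- The sequence `d`, indexed from `1` as in the definition of the Fano-type-1 distribution,
reindexed to start at `0`. -/
def shift (d : ℕ → ℝ) (x : ℕ) : ℝ := d (x + 1)

theorem sum_Icc_one_eq_sum_range_shift (d : ℕ → ℝ) (k : ℕ) :
    ∑ i ∈ Icc 1 k, d i = ∑ x ∈ range k, shift d x := by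
  rw [range_eq_Ico]
  exact (sum_Ico_add' d 0 k 1).symm

theorem entE_shift {p : ℕ → ℝ} (hp : p 0 = 0) : entE (shift p) = entE p := by
  rw [entE, entE, ← Summable.sum_add_tsum_nat_add' (k := 1)
    (f := fun x => ENNReal.ofReal (p x).negMulLog) ENNReal.summable]
  simp [hp, shift]

section Rearrangement

variable {Q d : ℕ → ℝ}

theorem IsPmf.sum_le_topSum (hQ : IsPmf Q) (s : Finset ℕ) : ∑ x ∈ s, Q x ≤ topSum Q #s :=
  le_csSup ⟨1, by rintro _ ⟨t, -, rfl⟩; exact hQ.sum_le_one t⟩ ⟨s, rfl, rfl⟩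

theorem topSum_le {k : ℕ} {c : ℝ} (h : ∀ s : Finset ℕ, #s = k → ∑ x ∈ s, Q x ≤ c) :
    topSum Q k ≤ c :=
  csSup_le ⟨_, range k, card_range k, rfl⟩ (by rintro _ ⟨s, hs, rfl⟩; exact h s hs)

theorem IsPmf.topSum_le_succ (hQ : IsPmf Q) (k : ℕ) : topSum Q k ≤ topSum Q (k + 1) := by
  refine topSum_le fun s hs => ?_
  obtain ⟨a, ha⟩ := Infinite.exists_notMem_finset s
  calc ∑ x ∈ s, Q x ≤ ∑ x ∈ insert a s, Q x := by
        rw [sum_insert ha]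
        exact le_add_of_nonneg_left (hQ.1 a)
    _ ≤ topSum Q (k + 1) := by
        simpa [card_insert_of_notMem ha, hs] using hQ.sum_le_topSum (insert a s)

theorem IsDecRearr.sum_range_shift (hd : IsDecRearr Q d) (k : ℕ) :
    ∑ x ∈ range k, shift d x = topSum Q k := by
  rw [← sum_Icc_one_eq_sum_range_shift, hd.2.2]

theorem IsDecRearr.antitone_shift (hd : IsDecRearr Q d) : Antitone (shift d) :=
  fun x y hxy => hd.2.1 (x + 1) (y + 1) (Nat.le_add_left 1 x) (Nat.succ_le_succ hxy)

theorem IsDecRearr.isPmf_shift (hd : IsDecRearr Q d) (hQ : IsPmf Q) : IsPmf (shift d) := by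
  have hnonneg (x : ℕ) : 0 ≤ shift d x := by
    have hle := hQ.topSum_le_succ x
    rw [← hd.sum_range_shift, ← hd.sum_range_shift, sum_range_succ] at hle
    linarith
  refine .of_hasSum hnonneg ((hasSum_iff_tendsto_nat_of_nonneg hnonneg 1).2 ?_)
  simp only [hd.sum_range_shift]
  refine tendsto_of_tendsto_of_tendsto_of_le_of_le hQ.hasSum.tendsto_sum_nat tendsto_const_nhds
    (fun k => ?_) fun k => topSum_le fun s _ => hQ.sum_le_one s
  simpa using hQ.sum_le_topSum (range k)

end Rearrangement

section Fano

variable {d : ℕ → ℝ} {L : ℕ} {ε : ℝ}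

theorem mul_fanoV_succ {i : ℕ} (hi : i < L) :
    ((L : ℝ) - i) * fanoV d L ε (i + 1) = 1 - ε - ∑ x ∈ range i, shift d x := by
  have hne : (L : ℝ) - i ≠ 0 := sub_ne_zero.2 (Nat.cast_lt.2 hi).ne'
  rw [fanoV, if_pos (Nat.succ_le_of_lt hi), Nat.add_sub_cancel, sum_Icc_one_eq_sum_range_shift,
    Nat.cast_succ, sub_add_eq_sub_sub, sub_add_cancel, mul_div_cancel₀ _ hne]

theorem fanoV_succ_succ_le {i : ℕ} (hi : i + 1 < L) (h : fanoV d L ε (i + 1) ≤ shift d i) :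
    fanoV d L ε (i + 2) ≤ shift d i := by
  have hpos : 0 < (L : ℝ) - (i + 1 : ℕ) := sub_pos.2 (Nat.cast_lt.2 hi)
  have hnext : ((L : ℝ) - (i + 1 : ℕ)) * fanoV d L ε (i + 2) =
      ((L : ℝ) - i) * fanoV d L ε (i + 1) - shift d i := by
    rw [mul_fanoV_succ hi, mul_fanoV_succ (Nat.lt_of_succ_lt hi), sum_range_succ]
    ring
  refine le_of_mul_le_mul_left ?_ hpos
  rw [hnext]
  push_cast at hpos ⊢
  nlinarith

theorem fanoV_le_of_lt_fanoJ {i : ℕ} (hi : i + 1 < fanoJ d L ε) :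
    fanoV d L ε (i + 1) ≤ shift d i :=
  not_lt.1 fun h => Nat.notMem_of_lt_sInf hi ⟨Nat.le_add_left 1 i, h⟩

theorem exists_fanoJ_eq_succ (h : shift d L < 1) :
    ∃ j ≤ L, fanoJ d L ε = j + 1 ∧ shift d j < fanoV d L ε (j + 1) := by
  have hmem : L + 1 ∈ {j : ℕ | 1 ≤ j ∧ d j < fanoV d L ε j} :=
    ⟨Nat.le_add_left 1 L, by rwa [fanoV, if_neg (Nat.not_succ_le_self L)]⟩
  obtain ⟨hpos, hlt⟩ : 1 ≤ fanoJ d L ε ∧ d (fanoJ d L ε) < fanoV d L ε (fanoJ d L ε) :=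
    Nat.sInf_mem ⟨_, hmem⟩
  obtain ⟨j, hj⟩ := Nat.exists_eq_add_of_le' hpos
  rw [hj] at hlt
  have hle : fanoJ d L ε ≤ L + 1 := Nat.sInf_le hmem
  exact ⟨j, by omega, hj, hlt⟩

theorem fanoV_le_of_fanoJ_eq {j : ℕ} (hanti : Antitone (shift d)) (hj : fanoJ d L ε = j + 1)
    (hjL : j < L) {x : ℕ} (hx : x < j) : fanoV d L ε (j + 1) ≤ shift d x := by
  obtain ⟨i, rfl⟩ := Nat.exists_eq_add_of_lt hx
  exact (fanoV_succ_succ_le hjL (fanoV_le_of_lt_fanoJ (by omega))).trans (hanti (by omega))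

theorem one_sub_le_sum_range_of_fanoJ_eq (hL : 1 ≤ L) (hJ : fanoJ d L ε = L + 1) :
    1 - ε ≤ ∑ x ∈ range L, shift d x := by
  obtain ⟨i, rfl⟩ := Nat.exists_eq_add_of_le' hL
  have hV := mul_fanoV_succ (d := d) (ε := ε) i.lt_succ_self
  have hle := fanoV_le_of_lt_fanoJ (d := d) (L := i + 1) (ε := ε) (i := i) (by omega)
  rw [Nat.cast_succ, add_sub_cancel_left, one_mul] at hV
  rw [sum_range_succ]
  linarith

theorem exists_head_level (hanti : Antitone (shift d)) (hpmf : IsPmf (shift d)) (hL : 1 ≤ L)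
    (hJ : shift d L < 1) (hε : ε ≤ 1 - ∑ x ∈ range L, shift d x) :
    ∃ v, (∀ x < L, fanoType1 d L ε (x + 1) = max (shift d x) v) ∧
      ∑ x ∈ range L, max (shift d x) v = 1 - ε := by
  obtain ⟨j, hjL, hj, hlt⟩ := exists_fanoJ_eq_succ (ε := ε) hJ
  have hbefore (x : ℕ) (hx : x < j) : fanoType1 d L ε (x + 1) = shift d x :=
    if_pos (hj ▸ Nat.succ_lt_succ hx)
  rcases hjL.lt_or_eq with hjL | rfl
  · have habove (x : ℕ) (hx : x < j) := fanoV_le_of_fanoJ_eq hanti hj hjL hx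
    have hbelow (x : ℕ) (hx : j ≤ x) : shift d x ≤ fanoV d L ε (j + 1) := (hanti hx).trans hlt.le
    refine ⟨fanoV d L ε (j + 1), fun x hx => ?_, ?_⟩
    · rcases lt_or_ge x j with hxj | hxj
      · rw [hbefore x hxj, max_eq_left (habove x hxj)]
      · rw [max_eq_right (hbelow x hxj), fanoType1, hj, if_neg (by omega),
          if_pos (Nat.succ_le_of_lt hx)]
    · rw [sum_range_max_of_threshold hjL.le habove fun x hx _ => hbelow x hx, mul_fanoV_succ hjL]
      ring
  · refine ⟨0, fun x hx => (hbefore x hx).trans (max_eq_left (hpmf.1 x)).symm, ?_⟩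
    simp only [max_eq_left (hpmf.1 _)]
    linarith [one_sub_le_sum_range_of_fanoJ_eq hL hj]

theorem mul_fanoW {n : ℕ} (hn : L < n) :
    ((n : ℝ) - L) * fanoW d L ε n = ∑ x ∈ range n, shift d x - (1 - ε) := by
  have hne : (n : ℝ) - L ≠ 0 := sub_ne_zero.2 (Nat.cast_lt.2 hn).ne'
  rw [fanoW, if_neg hn.ne', sum_Icc_one_eq_sum_range_shift, mul_div_cancel₀ _ hne]

theorem sum_range_le_of_fanoW_lt (hanti : Antitone (shift d)) {m n : ℕ} (hLm : L ≤ m) (hmn : m ≤ n)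
    (hW : fanoW d L ε (n + 1) < d (n + 1)) :
    ∑ x ∈ range m, shift d x ≤ 1 - ε + ((m : ℝ) - L) * shift d n := by
  have hLn : L < n + 1 := by omega
  have hlt := mul_lt_mul_of_pos_left hW (sub_pos.2 (Nat.cast_lt (α := ℝ).2 hLn))
  have hmid : ((n + 1 : ℕ) - m : ℝ) * shift d n ≤ ∑ x ∈ Ico m (n + 1), shift d x := by
    have hcard := card_nsmul_le_sum (Ico m (n + 1)) (shift d) (shift d n) fun x hx =>
      hanti (Nat.lt_succ_iff.1 (mem_Ico.1 hx).2)
    rwa [Nat.card_Ico, nsmul_eq_mul, Nat.cast_sub (by omega)] at hcard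
  rw [mul_fanoW hLn, ← sum_range_add_sum_Ico _ (hmn.trans n.le_succ)] at hlt
  rw [shift] at hmid ⊢
  linarith

theorem exists_gt_fanoW_lt_of_fanoK_eq_top (hK : fanoK d L ε = ⊤) (N : ℕ) :
    ∃ n ≥ N, fanoW d L ε (n + 1) < d (n + 1) := by
  have hlt : (N : ℕ∞) < fanoK d L ε := hK ▸ ENat.natCast_lt_top N
  obtain ⟨_, ⟨n, rfl, -, hW⟩, hNn⟩ := lt_sSup_iff.1 hlt
  obtain ⟨k, rfl⟩ := Nat.exists_eq_add_of_lt (Nat.cast_lt.1 hNn)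
  exact ⟨N + k, Nat.le_add_right N k, hW⟩

theorem nonpos_of_fanoK_eq_top (hanti : Antitone (shift d)) (hpmf : IsPmf (shift d))
    (hK : fanoK d L ε = ⊤) : ε ≤ 0 := by
  have hpartial (m : ℕ) (hm : L ≤ m) : ∑ x ∈ range m, shift d x ≤ 1 - ε := by
    have hlim : Tendsto (fun N => 1 - ε + ((m : ℝ) - L) * shift d N) atTop (𝓝 (1 - ε)) := by
      simpa using
        (hpmf.hasSum.summable.tendsto_atTop_zero.const_mul ((m : ℝ) - L)).const_add (1 - ε)
    refine ge_of_tendsto' hlim fun N => ?_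
    obtain ⟨n, hn, hW⟩ := exists_gt_fanoW_lt_of_fanoK_eq_top hK (max m N)
    have hmL : 0 ≤ (m : ℝ) - L := sub_nonneg.2 (Nat.cast_le.2 hm)
    refine (sum_range_le_of_fanoW_lt hanti hm ((le_max_left m N).trans hn) hW).trans ?_
    gcongr
    exact hanti ((le_max_right m N).trans hn)
  have hone : 1 ≤ 1 - ε := le_of_tendsto hpmf.hasSum.tendsto_sum_nat
    ((eventually_ge_atTop L).mono hpartial)
  linarith

theorem fanoW_lt_of_fanoK_eq (hdL : 0 ≤ d L) {K : ℕ} (hK : fanoK d L ε = K) :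
    L ≤ K ∧ fanoW d L ε K < d K := by
  have hLW : fanoW d L ε L < d L := by
    rw [fanoW, if_pos rfl]
    linarith
  have : Nonempty {k : ℕ∞ | ∃ n : ℕ, k = n ∧ L ≤ n ∧ fanoW d L ε n < d n} :=
    ⟨⟨L, L, rfl, le_rfl, hLW⟩⟩
  obtain ⟨n, hn, hLn, hW⟩ : ∃ n : ℕ, fanoK d L ε = n ∧ L ≤ n ∧ fanoW d L ε n < d n :=
    ENat.sSup_mem_of_nonempty_of_lt_top (hK.trans_lt (ENat.natCast_lt_top K))
  obtain rfl : K = n := Nat.cast_inj.1 (hK.symm.trans hn)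
  exact ⟨hLn, hW⟩

theorem le_fanoW_succ_of_fanoK_eq {K : ℕ} (hK : fanoK d L ε = K) (hLK : L ≤ K) :
    shift d K ≤ fanoW d L ε (K + 1) := by
  by_contra! hlt
  have hle : ((K + 1 : ℕ) : ℕ∞) ≤ fanoK d L ε := le_sSup ⟨K + 1, rfl, hLK.trans K.le_succ, hlt⟩
  rw [hK, Nat.cast_le] at hle
  omega

theorem mul_shift_le_of_fanoK_eq {K : ℕ} (hK : fanoK d L ε = K) (hLK : L ≤ K) :
    ((K : ℝ) - L) * shift d K ≤ ∑ x ∈ range K, shift d x - (1 - ε) := by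
  have hLK' : L < K + 1 := Nat.lt_succ_iff.2 hLK
  have hle := mul_le_mul_of_nonneg_left (le_fanoW_succ_of_fanoK_eq hK hLK)
    (sub_pos.2 (Nat.cast_lt (α := ℝ).2 hLK')).le
  rw [mul_fanoW hLK', sum_range_succ] at hle
  push_cast at hle
  linarith

theorem exists_plateau_of_fanoK_eq (hanti : Antitone (shift d)) (hdL : 0 ≤ d L)
    (hε : ε ≤ 1 - ∑ x ∈ range L, shift d x) {K : ℕ} (hK : fanoK d L ε = K) :
    ∃ w, (L < K → w = fanoW d L ε K) ∧ (∀ x < K, w ≤ shift d x) ∧ shift d K ≤ w ∧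
      ((K : ℝ) - L) * w = ∑ x ∈ range K, shift d x - (1 - ε) := by
  obtain ⟨hLK, hW⟩ := fanoW_lt_of_fanoK_eq hdL hK
  have hmul := mul_shift_le_of_fanoK_eq hK hLK
  rcases hLK.lt_or_eq with hLK | rfl
  · refine ⟨fanoW d L ε K, fun _ => rfl, fun x hx => ?_, ?_, mul_fanoW hLK⟩
    · obtain ⟨k, rfl⟩ := Nat.exists_eq_add_of_lt hx
      exact hW.le.trans (hanti (Nat.le_add_right x k))
    · rw [← mul_fanoW hLK] at hmul
      exact le_of_mul_le_mul_left hmul (sub_pos.2 (Nat.cast_lt.2 hLK))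
  · refine ⟨shift d L, fun h => absurd h (lt_irrefl L), fun x hx => hanti hx.le, le_rfl, ?_⟩
    rw [sub_self, zero_mul] at hmul ⊢
    linarith

theorem fanoType1_succ_of_le {x : ℕ} (hJ : shift d L < 1) (hx : L ≤ x) :
    fanoType1 d L ε (x + 1) =
      if ((x + 1 : ℕ) : ℕ∞) ≤ fanoK d L ε then
        if fanoK d L ε = ⊤ then 0 else fanoW d L ε (fanoK d L ε).toNat
      else shift d x := by
  obtain ⟨j, hjL, hj, -⟩ := exists_fanoJ_eq_succ (ε := ε) hJ
  rw [fanoType1, if_neg (by omega), if_neg (by omega), shift]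

theorem exists_tail_level (hanti : Antitone (shift d)) (hpmf : IsPmf (shift d)) (hdL : 0 ≤ d L)
    (hJ : shift d L < 1) (hε0 : 0 ≤ ε) (hε : ε ≤ 1 - ∑ x ∈ range L, shift d x) :
    ∃ w, 0 ≤ w ∧ (∀ x, L ≤ x → fanoType1 d L ε (x + 1) = min (shift d x) w) ∧
      HasSum (fun x => min (shift d (x + L)) w) ε := by
  rcases eq_or_ne (fanoK d L ε) ⊤ with hK | hK
  · obtain rfl : ε = 0 := (nonpos_of_fanoK_eq_top hanti hpmf hK).antisymm hε0
    have hmin (x : ℕ) : min (shift d x) 0 = 0 := min_eq_right (hpmf.1 x)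
    refine ⟨0, le_rfl, fun x hx => ?_, by simpa only [hmin] using hasSum_zero⟩
    rw [fanoType1_succ_of_le hJ hx, hK, if_pos le_top, if_pos rfl, hmin]
  · obtain ⟨K, hK⟩ := ENat.ne_top_iff_exists.1 hK
    obtain ⟨w, hw, habove, hKw, hmass⟩ := exists_plateau_of_fanoK_eq hanti hdL hε hK.symm
    have hbelow (x : ℕ) (hx : K ≤ x) : shift d x ≤ w := (hanti hx).trans hKw
    refine ⟨w, (hpmf.1 K).trans hKw, fun x hx => ?_, ?_⟩
    · simp only [fanoType1_succ_of_le hJ hx, ← hK, Nat.cast_le, ENat.natCast_ne_top, if_false,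
        ENat.toNat_natCast]
      rcases lt_or_ge x K with hxK | hxK
      · rw [if_pos (Nat.succ_le_of_lt hxK), min_eq_right (habove x hxK), hw (hx.trans_lt hxK)]
      · rw [if_neg (hxK.trans_lt x.lt_succ_self).not_ge, min_eq_left (hbelow x hxK)]
    · have hsum := hasSum_min_of_threshold hpmf (fanoW_lt_of_fanoK_eq hdL hK.symm).1 habove hbelow
      rwa [hmass, sub_add_sub_cancel', sub_sub_cancel] at hsum

theorem shift_lt_one (hanti : Antitone (shift d)) (hpmf : IsPmf (shift d)) (hL : 1 ≤ L) :
    shift d L < 1 := by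
  have hsum := hpmf.sum_le_one (range 2)
  have hle : shift d L ≤ shift d 1 := hanti hL
  have hle' : shift d 1 ≤ shift d 0 := hanti zero_le_one
  rw [sum_range_succ, sum_range_one] at hsum
  linarith

theorem isOptimal_shift_fanoType1 (hanti : Antitone (shift d)) (hpmf : IsPmf (shift d))
    (hL : 1 ≤ L) (hε0 : 0 ≤ ε) (hε : ε ≤ 1 - ∑ x ∈ range L, shift d x) :
    IsOptimal (shift d) L ε (shift (fanoType1 d L ε)) := by
  have hJ := shift_lt_one hanti hpmf hL
  have hdL : 0 ≤ d L := by simpa [shift, Nat.sub_add_cancel hL] using hpmf.1 (L - 1)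
  obtain ⟨v, hhead, hheadSum⟩ := exists_head_level hanti hpmf hL hJ hε
  obtain ⟨w, hw, htail, htailSum⟩ := exists_tail_level hanti hpmf hdL hJ hε0 hε
  have hlev : shift (fanoType1 d L ε) = levelled (shift d) L v w := by
    funext x
    rcases lt_or_ge x L with hx | hx
    · rw [levelled_of_lt hx, ← hhead x hx, shift]
    · rw [levelled_of_le hx, ← htail x hx, shift]
  have hmass : ∑ x ∈ range L, levelled (shift d) L v w x = 1 - ε := by
    rw [← hheadSum]
    exact sum_congr rfl fun x hx => levelled_of_lt (mem_range.1 hx)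
  have hsum : HasSum (levelled (shift d) L v w) 1 := by
    have htotal := HasSum.sum_range_add (f := levelled (shift d) L v w) (k := L)
      (by simpa only [levelled_of_le (Nat.le_add_left L _)] using htailSum)
    rwa [hmass, sub_add_cancel] at htotal
  rw [hlev]
  exact isOptimal_levelled hanti hpmf (.of_hasSum (levelled_nonneg hpmf.1 hw) hsum) hmass

theorem fanoType1_zero (h0 : d 0 = 0) (hJ : shift d L < 1) : fanoType1 d L ε 0 = 0 := by
  obtain ⟨j, -, hj, -⟩ := exists_fanoJ_eq_succ (ε := ε) hJ
  rw [fanoType1, if_pos (hj ▸ j.succ_pos), h0]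

end Fano

theorem stmt_13_general (Q d : ℕ → ℝ) (L : ℕ)
    (hQ : IsPmf Q) (hd : IsDecRearr Q d) (hL : 1 ≤ L) :
    ∀ ε₁ ε₂ l : ℝ, 0 ≤ ε₁ → ε₁ ≤ 1 - topSum Q L → 0 ≤ ε₂ → ε₂ ≤ 1 - topSum Q L →
      0 ≤ l → l ≤ 1 →
      ENNReal.ofReal l * entE (fanoType1 d L ε₁) +
        ENNReal.ofReal (1 - l) * entE (fanoType1 d L ε₂) ≤
      entE (fanoType1 d L (l * ε₁ + (1 - l) * ε₂)) := by
  intro ε₁ ε₂ l h₁ h₁' h₂ h₂' hl hl'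
  have hanti := hd.antitone_shift
  have hpmf := hd.isPmf_shift hQ
  have hopt {ε : ℝ} (hε : ε ∈ Set.Icc 0 (1 - topSum Q L)) :
      IsOptimal (shift d) L ε (shift (fanoType1 d L ε)) :=
    isOptimal_shift_fanoType1 hanti hpmf hL hε.1 (hd.sum_range_shift L ▸ hε.2)
  have hentE (ε : ℝ) : entE (shift (fanoType1 d L ε)) = entE (fanoType1 d L ε) :=
    entE_shift (fanoType1_zero hd.1 (shift_lt_one hanti hpmf hL))
  have hmem : l * ε₁ + (1 - l) * ε₂ ∈ Set.Icc 0 (1 - topSum Q L) :=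
    convex_Icc _ _ ⟨h₁, h₁'⟩ ⟨h₂, h₂'⟩ hl (sub_nonneg.2 hl') (add_sub_cancel l 1)
  simp only [← hentE]
  exact (hopt ⟨h₁, h₁'⟩).entE_concave (hopt ⟨h₂, h₂'⟩) (hopt hmem) hl (sub_nonneg.2 hl')
    (add_sub_cancel l 1)

/-- If `H(Q) < ∞`, the map `ε ↦ H(P₁(Q,L,ε))` is concave on
`[0, 1 − ∑_{x=1}^L Q↓(x)]`, where `P₁(Q,L,ε)` is the Fano-type-1
distribution. -/
theorem stmt_13 (Q d : ℕ → ℝ) (L : ℕ)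
    (hQ : IsPmf Q) (hd : IsDecRearr Q d) (hL : 1 ≤ L) (hH : entE Q ≠ ⊤) :
    ∀ ε₁ ε₂ l : ℝ, 0 ≤ ε₁ → ε₁ ≤ 1 - topSum Q L → 0 ≤ ε₂ → ε₂ ≤ 1 - topSum Q L →
      0 ≤ l → l ≤ 1 →
      ENNReal.ofReal l * entE (fanoType1 d L ε₁) +
        ENNReal.ofReal (1 - l) * entE (fanoType1 d L ε₂) ≤
      entE (fanoType1 d L (l * ε₁ + (1 - l) * ε₂)) :=
  stmt_13_general Q d L hQ hd hL
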